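/- arXiv:2005.08585 — 2 statements merged into one kernel-verified Lean document; each statement's English description precedes it below -/
import Mathlib

section
/- Let (J_n) be a convex exhaustion in ℝ^d (p(J_n) → ∞, p(J_n)^{-1/(d−1)}J_n → J_∞ in Hausdorff metric, p(J_∞) = 1) and I a convex body with 0 ∈ I and finite diameter D = diam(I). Then limsup_n card((J_n \ (J_n ⊖ I)) ∩ ℤ^d)/p(J_n) ≤ D + √d. -/
open Set MeasureTheory Metric Filter Topology Pointwise

/-- Perimeter: the `(d-1)`-dimensional Hausdorff measure of the boundary. -/
noncomputable def per {d : ℕ} (J : Set (EuclideanSpace ℝ (Fin d))) : ℝ :=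
  (μH[(d : ℝ) - 1] (frontier J)).toReal

/-- The lattice points: points of `ℝ^d` with all coordinates integers. -/
def IsLatticePt {d : ℕ} (x : EuclideanSpace ℝ (Fin d)) : Prop :=
  ∀ i, ∃ n : ℤ, x i = (n : ℝ)

/-- Erosion `J ⊖ I = {x | ∀ i ∈ I, x + i ∈ J}`. -/
def erode {d : ℕ} (J I : Set (EuclideanSpace ℝ (Fin d))) : Set (EuclideanSpace ℝ (Fin d)) :=
  {x | ∀ i ∈ I, x + i ∈ J}

/-!
Lattice points of `J \ (J ⊖ I)` carry disjoint unit cubes inside `(J \ (J ⊖ I)) + [0,1]^d`, so their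
number is at most the volume of that set. By Rådström's cancellation law the set lies in the inner
collar of depth `D + √d` of the convex body `K = J + [0,1]^d`. A collar `K(r)` has volume at most
`r p(K)`: for a polyhedron it is covered, up to a null set, by prisms of height `r` over the facets,
and between a general body and any larger homothetic copy of it there is a polyhedron. Finally, the
convergence of the rescaled bodies makes `J n` contain balls of radius tending to infinity, so that
`J n + [0,1]^d` fits into a `(1 + ε)`-homothetic copy of `J n`; since perimeter is monotone on
convex sets, `p(J n + [0,1]^d) ≤ (1 + ε)^(d-1) p(J n)`.
-/

/-- The inner collar of depth `r` of `K`, written `K(r)` in the paper: the points of `K` that are at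
distance at most `r` from some point outside `K`. -/
def innerCollar {X : Type*} [PseudoMetricSpace X] (r : ℝ) (K : Set X) : Set X :=
  {x ∈ K | ¬closedBall x r ⊆ K}

theorem innerCollar_mono {X : Type*} [PseudoMetricSpace X] {r r' : ℝ} (h : r ≤ r') (K : Set X) :
    innerCollar r K ⊆ innerCollar r' K := fun _ hx =>
  ⟨hx.1, fun hball => hx.2 ((closedBall_subset_closedBall h).trans hball)⟩

theorem innerCollar_eq_empty {X : Type*} [MetricSpace X] {r : ℝ} (hr : r ≤ 0) (K : Set X) :
    innerCollar r K = ∅ := by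
  refine eq_empty_of_forall_notMem fun x hx => hx.2 ?_
  calc closedBall x r ⊆ closedBall x 0 := closedBall_subset_closedBall hr
    _ ⊆ K := by simpa using hx.1

theorem subset_interior_of_disjoint_frontier {X : Type*} [TopologicalSpace X] {s t : Set X}
    (hs : IsPreconnected s) (hst : (s ∩ t).Nonempty) (hdisj : Disjoint s (frontier t)) :
    s ⊆ interior t := by
  have hclosure : s ∩ closure t ⊆ interior t := fun x hx => by
    by_contra hint
    exact disjoint_left.1 hdisj hx.1 ⟨hx.2, hint⟩
  refine hs.subset_of_closure_inter_subset isOpen_interior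
    (hst.mono fun x hx => ⟨hx.1, hclosure ⟨hx.1, subset_closure hx.2⟩⟩) fun x hx => ?_
  exact hclosure ⟨hx.2, closure_mono interior_subset hx.1⟩

section NormedSpace

variable {E : Type*} [NormedAddCommGroup E] [NormedSpace ℝ E]

theorem exists_add_smul_mem_frontier {L : Set E} (hL : Bornology.IsBounded L) {y u : E}
    (hy : y ∈ L) (hu : u ≠ 0) : ∃ t : ℝ, 0 ≤ t ∧ y + t • u ∈ frontier L := by
  by_contra! hmiss
  have hray : IsPreconnected ((fun t : ℝ => y + t • u) '' Ici 0) :=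
    isPreconnected_Ici.image _ (by fun_prop)
  have hrayL : (fun t : ℝ => y + t • u) '' Ici 0 ⊆ L :=
    (subset_interior_of_disjoint_frontier hray ⟨y, ⟨0, by simp⟩, hy⟩
      (disjoint_left.2 (forall_mem_image.2 hmiss))).trans interior_subset
  have hnorm : 0 < ‖u‖ := norm_pos_iff.2 hu
  have hpos : 0 ≤ (diam L + 1) / ‖u‖ := by positivity
  have hdiam := dist_le_diam_of_mem hL hy (hrayL (mem_image_of_mem _ hpos))
  rw [dist_self_add_right, norm_smul, Real.norm_of_nonneg hpos,
    div_mul_cancel₀ _ hnorm.ne'] at hdiam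
  linarith

/-- Rådström's cancellation law. -/
theorem mem_of_forall_add_mem_add {J Q : Set E} (hJ : Convex ℝ J) (hJc : IsClosed J)
    (hQ : Bornology.IsBounded Q) (hQne : Q.Nonempty) {x : E} (h : ∀ q ∈ Q, x + q ∈ J + Q) :
    x ∈ J := by
  by_contra hx
  obtain ⟨f, c, hfJ, hfx⟩ := geometric_hahn_banach_closed_point hJ hJc hx
  have hbdd : BddAbove (f '' Q) := (f.lipschitz.isBounded_image hQ).bddAbove
  have hgap : ∀ a ∈ f '' Q, a ≤ sSup (f '' Q) - (f x - c) := by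
    rintro _ ⟨q, hq, rfl⟩
    obtain ⟨j, hj, q', hq', hsum⟩ := h q hq
    have hf : f j + f q' = f x + f q := by simpa using congrArg f hsum
    linarith [hfJ j hj, le_csSup hbdd (mem_image_of_mem f hq')]
  linarith [csSup_le (hQne.image f) hgap]

theorem closedBall_sub_subset_of_subset_thickening {B : Set E} (hB : Convex ℝ B)
    (hBc : IsClosed B) {c : E} {ρ δ : ℝ} (hδ : 0 < δ) (h : closedBall c ρ ⊆ thickening δ B) :
    closedBall c (ρ - δ) ⊆ B := by
  intro x hx
  refine mem_of_forall_add_mem_add hB hBc isBounded_ball ⟨0, mem_ball_self hδ⟩ fun q hq => ?_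
  rw [add_ball_zero]
  refine h ?_
  calc dist (x + q) c ≤ dist (x + q) x + dist x c := dist_triangle _ _ _
    _ ≤ δ + (ρ - δ) := by
      gcongr
      · simpa using (mem_ball_zero_iff.1 hq).le
      · exact hx
    _ = ρ := by ring

theorem eventually_exists_closedBall_subset {ι : Type*} {l : Filter ι} {J : ι → Set E} {s : ι → ℝ}
    {A : Set E} (hJ : ∀ i, IsCompact (J i) ∧ Convex ℝ (J i) ∧ (J i).Nonempty)
    (hs : Tendsto s l (𝓝[>] 0)) (hA : Bornology.IsBounded A) (hAint : (interior A).Nonempty)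
    (hdist : Tendsto (fun i => hausdorffDist (s i • J i) A) l (𝓝 0)) (R : ℝ) :
    ∀ᶠ i in l, ∃ c, closedBall c R ⊆ J i := by
  obtain ⟨x, hx⟩ := hAint
  obtain ⟨ρ, hρ, hρA⟩ : ∃ ρ > 0, closedBall x ρ ⊆ A :=
    nhds_basis_closedBall.mem_iff.1 (mem_interior_iff_mem_nhds.1 hx)
  obtain ⟨hs0, hspos⟩ := tendsto_nhdsWithin_iff.1 hs
  have hsR : Tendsto (fun i => s i * |R|) l (𝓝 0) := by simpa using hs0.mul_const |R|
  filter_upwards [hdist.eventually_lt_const (half_pos hρ), hsR.eventually_lt_const (half_pos hρ),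
    hspos] with i hdi hRi (hsi : 0 < s i)
  obtain ⟨hJc, hJconv, hJne⟩ := hJ i
  have hfin : hausdorffEDist (s i • J i) A ≠ ⊤ :=
    hausdorffEDist_ne_top_of_nonempty_of_bounded hJne.smul_set ⟨x, interior_subset hx⟩
      (hJc.smul _).isBounded hA
  have hthick : closedBall x ρ ⊆ thickening (ρ / 2) (s i • J i) := fun y hy => by
    obtain ⟨z, hz, hzy⟩ := exists_dist_lt_of_hausdorffDist_lt' (hρA hy) hdi hfin
    exact mem_thickening_iff.2 ⟨z, hz, by rwa [dist_comm]⟩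
  refine ⟨(s i)⁻¹ • x, ?_⟩
  have hscaled : s i • closedBall ((s i)⁻¹ • x) |R| ⊆ s i • J i := by
    rw [smul_closedBall _ _ (abs_nonneg R), smul_inv_smul₀ hsi.ne', Real.norm_of_nonneg hsi.le]
    refine (closedBall_subset_closedBall ?_).trans (closedBall_sub_subset_of_subset_thickening
      (hJconv.smul _) (hJc.smul _).isClosed (half_pos hρ) hthick)
    linarith
  exact (closedBall_subset_closedBall (le_abs_self R)).trans
    ((smul_set_subset_smul_set_iff₀ hsi.ne').1 hscaled)

theorem add_subset_image_homothety {J Q : Set E} (hJ : Convex ℝ J) {c : E} {R ε : ℝ}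
    (hball : closedBall c R ⊆ J) (hε : 0 < ε) (hQ : Q ⊆ closedBall 0 (ε * R)) :
    J + Q ⊆ AffineMap.homothety c (1 + ε) '' J := by
  rintro _ ⟨x, hx, q, hq, rfl⟩
  have hq' : c + ε⁻¹ • q ∈ J := hball <| by
    rw [mem_closedBall, dist_self_add_left, norm_smul, norm_inv, Real.norm_of_nonneg hε.le,
      inv_mul_le_iff₀ hε]
    exact mem_closedBall_zero_iff.1 (hQ hq)
  refine ⟨(1 + ε)⁻¹ • x + ((1 + ε)⁻¹ * ε) • (c + ε⁻¹ • q),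
    hJ hx hq' (by positivity) (by positivity) (by field_simp), ?_⟩
  rw [AffineMap.homothety_apply, vsub_eq_sub, vadd_eq_add]
  match_scalars <;> field_simp
  ring

theorem frontier_image_homothety (c : E) {t : ℝ} (ht : t ≠ 0) (s : Set E) :
    frontier (AffineMap.homothety c t '' s) = AffineMap.homothety c t '' frontier s :=
  (((AffineEquiv.homothetyUnitsMulHom c (Units.mk0 t ht)).toEquiv.toHomeomorphOfContinuousOpen
    (AffineMap.homothety_continuous c t) (AffineMap.homothety_isOpenMap c t ht)).image_frontier
      s).symm

theorem injective_homothety (c : E) {t : ℝ} (ht : t ≠ 0) :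
    Function.Injective (AffineMap.homothety c t) :=
  (AffineEquiv.homothetyUnitsMulHom c (Units.mk0 t ht)).injective

theorem innerCollar_subset_of_subset_image_homothety {K P : Set E}
    (hK : Bornology.IsBounded K) {c : E} (hc : c ∈ K) {ε : ℝ} (hε : 0 ≤ ε) (hKP : K ⊆ P)
    (hPK : P ⊆ AffineMap.homothety c (1 + ε) '' K) (r : ℝ) :
    innerCollar r K ⊆ innerCollar (r + ε * (r + diam K)) P := by
  rintro x ⟨hx, hball⟩
  obtain ⟨y, hyx, hy⟩ := not_subset.1 hball
  have hyP : AffineMap.homothety c (1 + ε) y ∉ P := fun h =>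
    hy (((injective_homothety c (by positivity)).mem_set_image).1 (hPK h))
  refine ⟨hKP hx, fun hsub => hyP (hsub ?_)⟩
  have hyc : dist c y ≤ r + diam K :=
    calc dist c y ≤ dist c x + dist x y := dist_triangle _ _ _
      _ ≤ diam K + r := add_le_add (dist_le_diam_of_mem hK hc hx) (by rwa [dist_comm])
      _ = r + diam K := add_comm _ _
  calc dist (AffineMap.homothety c (1 + ε) y) x
      ≤ dist (AffineMap.homothety c (1 + ε) y) y + dist y x := dist_triangle _ _ _
    _ = ε * dist c y + dist y x := by
        rw [dist_homothety_self, sub_add_cancel_left, norm_neg, Real.norm_of_nonneg hε]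
    _ ≤ ε * (r + diam K) + r := by gcongr; exact hyx
    _ = r + ε * (r + diam K) := add_comm _ _

theorem sdiff_forall_add_mem_add_subset_innerCollar {J I Q : Set E} (hJ : Convex ℝ J)
    (hJc : IsClosed J) (hI : Bornology.IsBounded I) (hQ : Bornology.IsBounded Q)
    (hQne : Q.Nonempty) :
    (J \ {x | ∀ i ∈ I, x + i ∈ J}) + Q ⊆ innerCollar (diam (insert 0 I) + diam Q) (J + Q) := by
  rintro _ ⟨x, ⟨hx, hxe⟩, q, hq, rfl⟩
  obtain ⟨i, hi, hxi⟩ : ∃ i ∈ I, x + i ∉ J := by simpa using hxe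
  obtain ⟨q', hq', hout⟩ : ∃ q' ∈ Q, x + i + q' ∉ J + Q := by
    by_contra! h
    exact hxi (mem_of_forall_add_mem_add hJ hJc hQ hQne h)
  refine ⟨add_mem_add hx hq, fun hsub => hout (hsub ?_)⟩
  calc dist (x + i + q') (x + q) = dist (i + q') (0 + q) := by simp [add_assoc]
    _ ≤ dist i 0 + dist q' q := dist_add_add_le _ _ _ _
    _ ≤ diam (insert 0 I) + diam Q := by
        gcongr
        · exact dist_le_diam_of_mem (hI.insert 0) (mem_insert_of_mem _ hi) (mem_insert _ _)
        · exact dist_le_diam_of_mem hQ hq' hq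

end NormedSpace

section InnerProductSpace

variable {E : Type*} [NormedAddCommGroup E] [InnerProductSpace ℝ E]

theorem dist_le_dist_of_inner_sub_nonpos {y y' z z' : E} (h : inner ℝ (z - y) (y' - y) ≤ 0)
    (h' : inner ℝ (z' - y') (y - y') ≤ 0) : dist y y' ≤ dist z z' := by
  have hinner : ‖y - y'‖ * ‖y - y'‖ ≤ ‖z - z'‖ * ‖y - y'‖ := by
    refine le_trans ?_ (real_inner_le_norm (z - z') (y - y'))
    rw [← real_inner_self_eq_norm_mul_norm]
    simp only [inner_sub_left, inner_sub_right] at *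
    linarith
  rw [dist_eq_norm, dist_eq_norm]
  by_contra! hlt
  nlinarith [norm_nonneg (z - z')]

section Complete

variable [CompleteSpace E]

theorem exists_inner_le_of_notMem_interior {K : Set E} (hK : Convex ℝ K)
    (hKint : (interior K).Nonempty) {y : E} (hy : y ∉ interior K) :
    ∃ u : E, u ≠ 0 ∧ ∀ a ∈ K, inner ℝ u a ≤ inner ℝ u y := by
  obtain ⟨f, hf, hfK⟩ := geometric_hahn_banach_of_nonempty_interior_point hK hy hKint
  refine ⟨(InnerProductSpace.toDual ℝ E).symm f, by simpa using hf, fun a ha => ?_⟩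
  simpa only [InnerProductSpace.toDual_symm_apply] using hfK a ha

theorem exists_unit_inner_le_lt {K : Set E} (hK : Convex ℝ K) (hKc : IsClosed K)
    (hKne : K.Nonempty) {x : E} (hx : x ∉ K) :
    ∃ (u : E) (c : ℝ), ‖u‖ = 1 ∧ (∀ a ∈ K, inner ℝ u a ≤ c) ∧ c < inner ℝ u x := by
  obtain ⟨f, c, hfK, hfx⟩ := geometric_hahn_banach_closed_point hK hKc hx
  set v := (InnerProductSpace.toDual ℝ E).symm f
  have hfv : ∀ y, f y = inner ℝ v y := fun y => InnerProductSpace.toDual_symm_apply.symm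
  have hv : v ≠ 0 := by
    obtain ⟨a, ha⟩ := hKne
    intro hv
    have := (hfK a ha).trans hfx
    simp only [hfv, hv, inner_zero_left, lt_self_iff_false] at this
  have hpos : 0 < ‖v‖⁻¹ := inv_pos.2 (norm_pos_iff.2 hv)
  refine ⟨‖v‖⁻¹ • v, ‖v‖⁻¹ * c, norm_smul_inv_norm (𝕜 := ℝ) hv, fun a ha => ?_, ?_⟩
  · rw [real_inner_smul_left, ← hfv]
    exact mul_le_mul_of_nonneg_left (hfK a ha).le hpos.le
  · rw [real_inner_smul_left, ← hfv]
    exact mul_lt_mul_of_pos_left hfx hpos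

/- Outer normal rays of `K` give a distance-increasing map from the boundary of `K` into that of
`L`. -/
theorem hausdorffMeasure_frontier_mono_of_convex [MeasurableSpace E] [BorelSpace E] {K L : Set E}
    (hK : Convex ℝ K) (hKc : IsClosed K) (hKint : (interior K).Nonempty) (hKL : K ⊆ L)
    (hL : Bornology.IsBounded L) {s : ℝ} (hs : 0 ≤ s) :
    μH[s] (frontier K) ≤ μH[s] (frontier L) := by
  have hexit : ∀ y : frontier K, ∃ z ∈ frontier L, ∀ a ∈ K, inner ℝ (z - y) (a - y) ≤ 0 := by
    rintro ⟨y, hy⟩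
    obtain ⟨u, hu, huK⟩ := exists_inner_le_of_notMem_interior hK hKint hy.2
    obtain ⟨t, ht, htL⟩ :=
      exists_add_smul_mem_frontier hL (hKL (hKc.frontier_subset hy)) hu
    refine ⟨y + t • u, htL, fun a ha => ?_⟩
    rw [add_sub_cancel_left, real_inner_smul_left, inner_sub_right]
    exact mul_nonpos_of_nonneg_of_nonpos ht (sub_nonpos.2 (huK a ha))
  choose z hzL hz using hexit
  have hanti : AntilipschitzWith 1 z := AntilipschitzWith.of_le_mul_dist fun y y' => by
    rw [NNReal.coe_one, one_mul]
    exact dist_le_dist_of_inner_sub_nonpos (hz y y' (hKc.frontier_subset y'.2))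
      (hz y' y (hKc.frontier_subset y.2))
  calc μH[s] (frontier K) = μH[s] ((↑) '' (univ : Set (frontier K)) : Set E) := by simp
    _ = μH[s] (univ : Set (frontier K)) := isometry_subtype_coe.hausdorffMeasure_image (.inl hs) _
    _ ≤ μH[s] (z '' univ) := by simpa using hanti.le_hausdorffMeasure_image hs univ
    _ ≤ μH[s] (frontier L) := measure_mono (image_subset_iff.2 fun y _ => hzL y)

end Complete

end InnerProductSpace

section Polyhedron

variable {E : Type*} [NormedAddCommGroup E] [InnerProductSpace ℝ E]

/-- The polyhedron cut out by the half-spaces `inner ℝ u x ≤ c` for `(u, c) ∈ T`. -/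
def polyhedron (T : Finset (E × ℝ)) : Set E :=
  {x | ∀ p ∈ T, inner ℝ p.1 x ≤ p.2}

/-- The relatively open facet of `polyhedron T` cut out by the pair `p`: only the constraint `p` is
active on it. -/
def openFacet (T : Finset (E × ℝ)) (p : E × ℝ) : Set E :=
  {x | inner ℝ p.1 x = p.2 ∧ ∀ q ∈ T, q ≠ p → inner ℝ q.1 x < q.2}

/-- The right prism of height `r` standing, on the side `inner ℝ p.1 x ≤ p.2`, on a subset `F` of
the hyperplane `inner ℝ p.1 x = p.2` with unit normal `p.1`. It is defined through the orthogonal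
projection to that hyperplane, which makes its measurability evident. -/
def prism (p : E × ℝ) (r : ℝ) (F : Set E) : Set E :=
  {x | p.2 - inner ℝ p.1 x ∈ Icc 0 r ∧ x + (p.2 - inner ℝ p.1 x) • p.1 ∈ F}

variable {T : Finset (E × ℝ)}

theorem convex_polyhedron (T : Finset (E × ℝ)) : Convex ℝ (polyhedron T) := by
  rw [show polyhedron T = ⋂ p ∈ T, {x | inner ℝ p.1 x ≤ p.2} by ext; simp [polyhedron]]
  exact convex_iInter₂ fun p _ => convex_halfSpace_le (innerₗ E p.1).isLinear p.2

theorem isClosed_polyhedron (T : Finset (E × ℝ)) : IsClosed (polyhedron T) := by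
  rw [show polyhedron T = ⋂ p ∈ T, {x | inner ℝ p.1 x ≤ p.2} by ext; simp [polyhedron]]
  exact isClosed_biInter fun p _ => isClosed_le (by fun_prop) continuous_const

theorem mem_frontier_polyhedron {p : E × ℝ} (hp : p ∈ T) (hp0 : p.1 ≠ 0) {x : E}
    (hx : x ∈ polyhedron T) (hxp : inner ℝ p.1 x = p.2) : x ∈ frontier (polyhedron T) := by
  refine ⟨subset_closure hx, fun hint => ?_⟩
  have hline : Tendsto (fun t : ℝ => x + t • p.1) (𝓝[>] 0) (𝓝 x) := by
    have hcont : Continuous fun t : ℝ => x + t • p.1 := by fun_prop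
    simpa using (hcont.tendsto 0).mono_left nhdsWithin_le_nhds
  obtain ⟨t, ht, htpos : 0 < t⟩ :=
    ((hline.eventually (mem_interior_iff_mem_nhds.1 hint)).and self_mem_nhdsWithin).exists
  have hle := ht p hp
  rw [inner_add_right, hxp, real_inner_smul_right] at hle
  linarith [mul_pos htpos (real_inner_self_pos.2 hp0)]

theorem openFacet_subset_frontier {p : E × ℝ} (hp : p ∈ T) (hp0 : p.1 ≠ 0) :
    openFacet T p ⊆ frontier (polyhedron T) := fun x hx => by
  refine mem_frontier_polyhedron hp hp0 (fun q hq => ?_) hx.1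
  rcases eq_or_ne q p with rfl | hqp
  · exact hx.1.le
  · exact (hx.2 q hq hqp).le

theorem pairwiseDisjoint_openFacet (T : Finset (E × ℝ)) :
    (T : Set (E × ℝ)).PairwiseDisjoint (openFacet T) := fun p hp _q _hq hpq =>
  disjoint_left.2 fun _x hxp hxq => (hxq.2 p hp hpq).ne hxp.1

theorem measurableSet_openFacet [MeasurableSpace E] [BorelSpace E] (T : Finset (E × ℝ))
    (p : E × ℝ) : MeasurableSet (openFacet T p) := by
  have hactive : MeasurableSet {x : E | inner ℝ p.1 x = p.2} :=
    (isClosed_eq (by fun_prop) continuous_const).measurableSet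
  have hstrict (q : E × ℝ) : MeasurableSet {x : E | inner ℝ q.1 x < q.2} :=
    (isOpen_lt (by fun_prop) continuous_const).measurableSet
  convert hactive.inter (T.measurableSet_biInter fun q _ =>
    MeasurableSet.iInter fun _ : q ≠ p => hstrict q) using 1
  ext x
  simp [openFacet]

/- The facet hyperplane closest to a point `x` of the collar is the one `x` projects to inside the
polyhedron. -/
theorem innerCollar_polyhedron_subset (hT : ∀ p ∈ T, ‖p.1‖ = 1) (r : ℝ) :
    innerCollar r (polyhedron T) ⊆
      frontier (polyhedron T) ∪ ⋃ p ∈ T, prism p r (openFacet T p) := by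
  rintro x ⟨hx, hball⟩
  obtain ⟨y, hxy, hy⟩ := not_subset.1 hball
  obtain ⟨w, hw, hwy⟩ : ∃ w ∈ T, w.2 < inner ℝ w.1 y := by simpa [polyhedron] using hy
  have hwr : w.2 - inner ℝ w.1 x ≤ r :=
    calc w.2 - inner ℝ w.1 x ≤ inner ℝ w.1 (y - x) := by rw [inner_sub_right]; linarith
      _ ≤ ‖w.1‖ * ‖y - x‖ := real_inner_le_norm _ _
      _ ≤ r := by rw [hT w hw, one_mul, ← dist_eq_norm]; exact hxy
  obtain ⟨p, hp, hmin⟩ := T.exists_min_image (fun q => q.2 - inner ℝ q.1 x) ⟨w, hw⟩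
  rcases (hx p hp).eq_or_lt with hactive | hslack
  · exact .inl (mem_frontier_polyhedron hp (norm_ne_zero_iff.1 (by simp [hT p hp])) hx hactive)
  refine .inr (mem_biUnion hp ⟨⟨by linarith, (hmin w hw).trans hwr⟩, ?_, fun q hq hqp => ?_⟩)
  · rw [inner_add_right, real_inner_smul_right, real_inner_self_eq_norm_sq, hT p hp]
    ring
  · have hqmin := hmin q hq
    rw [inner_add_right, real_inner_smul_right]
    rcases eq_or_ne q.1 p.1 with hdir | hdir
    · have hoffset : q.2 ≠ p.2 := fun h => hqp (Prod.ext hdir h)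
      rw [hdir] at hqmin ⊢
      rw [real_inner_self_eq_norm_sq, hT p hp]
      have := lt_of_le_of_ne (by linarith) hoffset.symm
      linarith
    · have hangle := (inner_lt_one_iff_real_of_norm_eq_one (hT q hq) (hT p hp)).2 hdir
      nlinarith

theorem exists_polyhedron_between [CompleteSpace E] {K M : Set E} (hK : Convex ℝ K)
    (hKc : IsClosed K) (hKne : K.Nonempty) (hM : IsCompact M) (hKM : K ⊆ interior M) :
    ∃ T : Finset (E × ℝ),
      (∀ p ∈ T, ‖p.1‖ = 1) ∧ K ⊆ polyhedron T ∧ polyhedron T ⊆ M := by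
  classical
  have hsep : ∀ z ∈ frontier M, ∃ p : E × ℝ,
      ‖p.1‖ = 1 ∧ (∀ a ∈ K, inner ℝ p.1 a ≤ p.2) ∧ p.2 < inner ℝ p.1 z := fun z hz =>
    let ⟨u, c, huc⟩ := exists_unit_inner_le_lt hK hKc hKne fun hzK => hz.2 (hKM hzK)
    ⟨(u, c), huc⟩
  choose! p hp1 hpK hpz using hsep
  obtain ⟨t, ht, hcover⟩ := (hM.of_isClosed_subset isClosed_frontier
    hM.isClosed.frontier_subset).elim_nhds_subcover (fun z => {x | (p z).2 < inner ℝ (p z).1 x})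
    fun z hz => (isOpen_lt continuous_const (by fun_prop)).mem_nhds (hpz z hz)
  have hKP : K ⊆ polyhedron (t.image p) := fun a ha =>
    Finset.forall_mem_image.2 fun z hz => hpK z (ht z hz) a ha
  refine ⟨t.image p, Finset.forall_mem_image.2 fun z hz => hp1 z (ht z hz), hKP, ?_⟩
  have hdisj : Disjoint (polyhedron (t.image p)) (frontier M) := disjoint_left.2 fun x hx hxM => by
    obtain ⟨z, hz, hzx⟩ := mem_iUnion₂.1 (hcover hxM)
    exact (hx (p z) (Finset.mem_image_of_mem p hz)).not_gt hzx
  obtain ⟨a, ha⟩ := hKne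
  exact (subset_interior_of_disjoint_frontier (convex_polyhedron _).isPreconnected
    ⟨a, hKP ha, interior_subset (hKM ha)⟩ hdisj).trans interior_subset

theorem prism_inter_hyperplane {p : E × ℝ} (hp : ‖p.1‖ = 1) (r : ℝ) {F : Set E}
    (hFp : ∀ y ∈ F, inner ℝ p.1 y = p.2) (t : ℝ) :
    prism p r F ∩ AffineSubspace.mk' (t • p.1 +ᵥ p.2 • p.1) (ℝ ∙ p.1)ᗮ =
      {x ∈ t • p.1 +ᵥ F | t ∈ Icc (-r) 0} := by
  have hunit : inner ℝ p.1 p.1 = (1 : ℝ) := by rw [real_inner_self_eq_norm_sq, hp, one_pow]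
  have hplane (x : E) :
      x ∈ AffineSubspace.mk' (t • p.1 + p.2 • p.1) (ℝ ∙ p.1)ᗮ ↔ p.2 - inner ℝ p.1 x = -t := by
    rw [AffineSubspace.mem_mk', Submodule.mem_orthogonal_singleton_iff_inner_right, vsub_eq_sub,
      inner_sub_right, inner_add_right, real_inner_smul_right, real_inner_smul_right, hunit,
      mul_one, mul_one]
    constructor <;> intro h <;> linarith
  ext x
  simp only [prism, mem_inter_iff, mem_ofPred_eq, SetLike.mem_coe, hplane,
    mem_vadd_set_iff_neg_vadd_mem, vadd_eq_add]
  constructor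
  · rintro ⟨⟨hr, hF⟩, ht⟩
    rw [ht] at hr hF
    exact ⟨by rwa [neg_smul, add_comm] at hF, by linarith [hr.2], by linarith [hr.1]⟩
  · rintro ⟨hF, ht⟩
    have hxt : p.2 - inner ℝ p.1 x = -t := by
      have := hFp _ hF
      rw [inner_add_right, inner_neg_right, real_inner_smul_right, hunit] at this
      linarith
    rw [hxt]
    exact ⟨⟨⟨by linarith [ht.2], by linarith [ht.1]⟩, by rwa [neg_smul, add_comm]⟩, rfl⟩

variable [FiniteDimensional ℝ E] [MeasurableSpace E] [BorelSpace E] {k : ℕ}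

theorem volume_prism (hE : Module.finrank ℝ E = k + 1) {p : E × ℝ} (hp : ‖p.1‖ = 1) (r : ℝ)
    {F : Set E} (hF : MeasurableSet F) (hFp : ∀ y ∈ F, inner ℝ p.1 y = p.2) :
    volume (prism p r F) = ENNReal.ofReal r * μHE[k] F := by
  have hmeas : MeasurableSet (prism p r F) :=
    ((by fun_prop : Continuous fun x => p.2 - inner ℝ p.1 x).measurable measurableSet_Icc).inter
      ((by fun_prop : Continuous fun x : E => x + (p.2 - inner ℝ p.1 x) • p.1).measurable hF)
  have hslice (t : ℝ) :
      μHE[k] (prism p r F ∩ AffineSubspace.mk' (t • p.1 +ᵥ p.2 • p.1) (ℝ ∙ p.1)ᗮ) =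
        (Icc (-r) 0).indicator (fun _ => μHE[k] F) t := by
    rw [prism_inter_hyperplane hp r hFp]
    by_cases ht : t ∈ Icc (-r) 0 <;> simp [ht, measure_vadd]
  have hp0 : p.1 ≠ 0 := norm_ne_zero_iff.1 (hp ▸ one_ne_zero)
  rw [← InnerProductSpace.euclideanHausdorffMeasure_eq_volume,
    EuclideanGeometry.euclideanHausdorffMeasure_eq_lintegral (p.2 • p.1) hp0 hmeas]
  simp only [hE, Nat.add_sub_cancel, hslice]
  rw [lintegral_indicator_const measurableSet_Icc, Real.volume_Icc, zero_sub, neg_neg,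
    ← ofReal_norm, hp, ENNReal.ofReal_one, one_mul, mul_comm]

theorem volume_innerCollar_polyhedron_le (hE : Module.finrank ℝ E = k + 1)
    (hT : ∀ p ∈ T, ‖p.1‖ = 1) (r : ℝ) :
    volume (innerCollar r (polyhedron T)) ≤
      ENNReal.ofReal r * μHE[k] (frontier (polyhedron T)) := by
  calc volume (innerCollar r (polyhedron T))
      ≤ volume (frontier (polyhedron T)) + volume (⋃ p ∈ T, prism p r (openFacet T p)) :=
        (measure_mono (innerCollar_polyhedron_subset hT r)).trans (measure_union_le _ _)
    _ ≤ 0 + ∑ p ∈ T, volume (prism p r (openFacet T p)) :=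
        add_le_add ((convex_polyhedron T).addHaar_frontier volume).le
          (measure_biUnion_finset_le _ _)
    _ = ENNReal.ofReal r * ∑ p ∈ T, μHE[k] (openFacet T p) := by
        rw [zero_add, Finset.mul_sum]
        exact Finset.sum_congr rfl fun p hp =>
          volume_prism hE (hT p hp) r (measurableSet_openFacet T p) fun y hy => hy.1
    _ = ENNReal.ofReal r * μHE[k] (⋃ p ∈ T, openFacet T p) := by
        rw [measure_biUnion_finset (pairwiseDisjoint_openFacet T)
          fun p _ => measurableSet_openFacet T p]
    _ ≤ ENNReal.ofReal r * μHE[k] (frontier (polyhedron T)) := by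
        gcongr
        exact iUnion₂_subset fun p hp =>
          openFacet_subset_frontier hp (norm_ne_zero_iff.1 (by simp [hT p hp]))

end Polyhedron

section ConvexBody

variable {E : Type*} [NormedAddCommGroup E] [InnerProductSpace ℝ E] [FiniteDimensional ℝ E]
  [MeasurableSpace E] [BorelSpace E] {K L : Set E} {k : ℕ}

theorem euclideanHausdorffMeasure_frontier_le_of_subset_image_homothety (hK : Convex ℝ K)
    (hKc : IsClosed K) (hKint : (interior K).Nonempty) (hL : IsCompact L) {c : E} {t : ℝ}
    (ht : 0 < t) (hKL : K ⊆ AffineMap.homothety c t '' L) (k : ℕ) :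
    μHE[k] (frontier K) ≤ ENNReal.ofReal (t ^ k) * μHE[k] (frontier L) := by
  have hbdd : Bornology.IsBounded (AffineMap.homothety c t '' L) :=
    (hL.image (AffineMap.homothety_continuous c t)).isBounded
  calc μHE[k] (frontier K) ≤ μHE[k] (frontier (AffineMap.homothety c t '' L)) := by
        simp only [Measure.euclideanHausdorffMeasure_def, Measure.smul_apply]
        gcongr _ • ?_
        exact hausdorffMeasure_frontier_mono_of_convex hK hKc hKint hKL hbdd k.cast_nonneg
    _ = ENNReal.ofReal (t ^ k) * μHE[k] (frontier L) := by
        rw [frontier_image_homothety c ht.ne', euclideanHausdorffMeasure_homothety_image k c ht.ne',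
          ENNReal.smul_def, smul_eq_mul, ENNReal.coe_pow, ENNReal.ofReal_pow ht.le,
          ← enorm_eq_nnnorm, Real.enorm_of_nonneg ht.le]

/- Approximate `K` by polyhedra from outside. -/
theorem volume_innerCollar_le (hE : Module.finrank ℝ E = k + 1) (hK : Convex ℝ K)
    (hKc : IsCompact K) (hKint : (interior K).Nonempty) (r : ℝ) :
    volume (innerCollar r K) ≤ ENNReal.ofReal r * μHE[k] (frontier K) := by
  rcases le_or_gt r 0 with hr | hr
  · simp [innerCollar_eq_empty hr]
  obtain ⟨c, hc⟩ := hKint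
  have happrox : ∀ ε > 0, volume (innerCollar r K) ≤
      ENNReal.ofReal ((r + ε * (r + diam K)) * (1 + ε) ^ k) * μHE[k] (frontier K) := by
    intro ε hε
    obtain ⟨T, hT, hKT, hTK⟩ := exists_polyhedron_between hK hKc.isClosed ⟨c, interior_subset hc⟩
      (hKc.image (AffineMap.homothety_continuous c (1 + ε)))
      (hK.subset_interior_image_homothety_of_one_lt hc (1 + ε) (by linarith))
    have hdepth : 0 ≤ r + ε * (r + diam K) := by positivity
    calc volume (innerCollar r K)
        ≤ volume (innerCollar (r + ε * (r + diam K)) (polyhedron T)) :=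
          measure_mono (innerCollar_subset_of_subset_image_homothety hKc.isBounded
            (interior_subset hc) hε.le hKT hTK r)
      _ ≤ ENNReal.ofReal (r + ε * (r + diam K)) * μHE[k] (frontier (polyhedron T)) :=
          volume_innerCollar_polyhedron_le hE hT _
      _ ≤ ENNReal.ofReal (r + ε * (r + diam K)) *
            (ENNReal.ofReal ((1 + ε) ^ k) * μHE[k] (frontier K)) := by
          gcongr
          exact euclideanHausdorffMeasure_frontier_le_of_subset_image_homothety
            (convex_polyhedron T) (isClosed_polyhedron T) ⟨c, interior_mono hKT hc⟩ hKc
            (by positivity) hTK k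
      _ = ENNReal.ofReal ((r + ε * (r + diam K)) * (1 + ε) ^ k) * μHE[k] (frontier K) := by
          rw [← mul_assoc, ENNReal.ofReal_mul hdepth]
  have hcont : Continuous fun ε : ℝ => ENNReal.ofReal ((r + ε * (r + diam K)) * (1 + ε) ^ k) :=
    ENNReal.continuous_ofReal.comp (by fun_prop)
  have hlim : Tendsto (fun ε : ℝ => ENNReal.ofReal ((r + ε * (r + diam K)) * (1 + ε) ^ k))
      (𝓝[>] 0) (𝓝 (ENNReal.ofReal r)) := by
    simpa using (hcont.tendsto 0).mono_left nhdsWithin_le_nhds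
  exact ge_of_tendsto (ENNReal.Tendsto.mul_const hlim (.inl (ENNReal.ofReal_pos.2 hr).ne'))
    (eventually_nhdsWithin_of_forall happrox)

end ConvexBody

/- Mathlib normalises `μH[k]` to be the volume of `ℝ ^ k` for the sup norm; for the Euclidean norm,
whose distances are larger, it is therefore at least the volume. -/
theorem euclideanHausdorffMeasure_le_hausdorffMeasure {X : Type*} [EMetricSpace X]
    [MeasurableSpace X] [BorelSpace X] (k : ℕ) : (μHE[k] : Measure X) ≤ μH[k] := by
  have hvol (A : Set (EuclideanSpace ℝ (Fin k))) : volume A ≤ μH[k] A :=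
    calc volume A ≤ volume (WithLp.ofLp ⁻¹' (WithLp.ofLp '' A)) :=
          measure_mono (subset_preimage_image _ _)
      _ = volume (WithLp.ofLp '' A) :=
          (PiLp.volume_preserving_ofLp (Fin k)).measure_preimage_emb
            (MeasurableEquiv.toLp 2 (Fin k → ℝ)).symm.measurableEmbedding _
      _ = μH[k] (WithLp.ofLp '' A) := by rw [← hausdorffMeasure_pi_real, Fintype.card_fin]
      _ ≤ μH[k] A := by
          simpa using (PiLp.lipschitzWith_ofLp 2 _).hausdorffMeasure_image_le k.cast_nonneg A
  have hHaar : (μH[k] : Measure (EuclideanSpace ℝ (Fin k))).IsAddHaarMeasure := by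
    simpa using isAddHaarMeasure_hausdorffMeasure (E := EuclideanSpace ℝ (Fin k))
  have hfactor : (volume : Measure (EuclideanSpace ℝ (Fin k))).addHaarScalarFactor μH[k] ≤ 1 := by
    have hball := hvol (ball 0 1)
    rw [← EuclideanSpace.euclideanHausdorffMeasure_eq_volume,
      Measure.euclideanHausdorffMeasure_def, Measure.smul_apply, ENNReal.smul_def, smul_eq_mul]
      at hball
    refine ENNReal.coe_le_one_iff.1 ((ENNReal.mul_le_mul_iff_left (measure_ball_pos _ 0 one_pos).ne'
      measure_ball_lt_top.ne).1 (hball.trans_eq (one_mul _).symm))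
  intro s
  rw [Measure.euclideanHausdorffMeasure_def, Measure.smul_apply, ENNReal.smul_def, smul_eq_mul]
  exact mul_le_of_le_one_left' (ENNReal.coe_le_one_iff.2 hfactor)

section Lattice

variable {d : ℕ}

/-- The closed unit cube `[0,1]^d` of `ℝ^d`. -/
def unitCube (d : ℕ) : Set (EuclideanSpace ℝ (Fin d)) :=
  WithLp.ofLp ⁻¹' univ.pi fun _ => Icc 0 1

theorem zero_mem_unitCube : 0 ∈ unitCube d := fun _ _ => by simp

theorem convex_unitCube : Convex ℝ (unitCube d) :=
  (convex_pi fun _ _ => convex_Icc 0 1).is_linear_preimage (WithLp.linearEquiv 2 ℝ _).isLinear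

theorem isCompact_unitCube : IsCompact (unitCube d) :=
  (PiLp.homeomorph 2 _).isCompact_preimage.2 (isCompact_univ_pi fun _ => isCompact_Icc)

theorem dist_le_sqrt_of_mem_unitCube {x y : EuclideanSpace ℝ (Fin d)} (hx : x ∈ unitCube d)
    (hy : y ∈ unitCube d) : dist x y ≤ √d := by
  rw [EuclideanSpace.dist_eq]
  gcongr
  calc ∑ i, dist (x i) (y i) ^ 2 ≤ ∑ _i : Fin d, (1 : ℝ) := by
        gcongr with i
        exact pow_le_one₀ dist_nonneg (Real.dist_le_of_mem_Icc_01 (hx i trivial) (hy i trivial))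
    _ = d := by simp

theorem eq_of_isLatticePt_of_mem_Ico {z w x : EuclideanSpace ℝ (Fin d)} (hz : IsLatticePt z)
    (hw : IsLatticePt w) (hzx : ∀ i, x i - z i ∈ Ico (0 : ℝ) 1)
    (hwx : ∀ i, x i - w i ∈ Ico (0 : ℝ) 1) : z = w := by
  have hfloor {v : EuclideanSpace ℝ (Fin d)} (hv : IsLatticePt v)
      (hvx : ∀ i, x i - v i ∈ Ico (0 : ℝ) 1) (i : Fin d) : v i = ⌊x i⌋ := by
    obtain ⟨n, hn⟩ := hv i
    have hfloor_eq : ⌊x i⌋ = n := Int.floor_eq_iff.2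
      ⟨by linarith [(hvx i).1], by linarith [(hvx i).2]⟩
    rw [hn, hfloor_eq]
  ext i
  rw [hfloor hz hzx, hfloor hw hwx]

theorem encard_le_volume_add_unitCube {S : Set (EuclideanSpace ℝ (Fin d))}
    (hS : ∀ z ∈ S, IsLatticePt z) : (S.encard : ENNReal) ≤ volume (S + unitCube d) := by
  let cell : Set (EuclideanSpace ℝ (Fin d)) := WithLp.ofLp ⁻¹' univ.pi fun _ => Ico 0 1
  have hIco : MeasurableSet (univ.pi fun _ : Fin d => Ico (0 : ℝ) 1) :=
    MeasurableSet.univ_pi fun _ => measurableSet_Ico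
  have hcell : MeasurableSet cell := (PiLp.volume_preserving_ofLp (Fin d)).measurable hIco
  have hvol : volume cell = 1 := by
    rw [(PiLp.volume_preserving_ofLp (Fin d)).measure_preimage hIco.nullMeasurableSet,
      Real.volume_pi_Ico]
    simp
  have hmem (z : EuclideanSpace ℝ (Fin d)) {x : EuclideanSpace ℝ (Fin d)} (hx : x ∈ z +ᵥ cell)
      (i : Fin d) : x i - z i ∈ Ico (0 : ℝ) 1 := by
    obtain ⟨c, hc, rfl⟩ := hx
    simpa using hc i trivial
  have hdisj : Pairwise (Function.onFun Disjoint fun z : S => z.1 +ᵥ cell) := by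
    intro z w hzw
    refine disjoint_left.2 fun x hxz hxw => hzw (Subtype.ext ?_)
    exact eq_of_isLatticePt_of_mem_Ico (hS z z.2) (hS w w.2) (hmem z hxz) (hmem w hxw)
  calc (S.encard : ENNReal) = ∑' z : S, volume (z.1 +ᵥ cell) := by
        simp only [measure_vadd, hvol, ENNReal.tsum_set_one]
    _ ≤ volume (⋃ z : S, z.1 +ᵥ cell) :=
        tsum_meas_le_meas_iUnion_of_disjoint volume (fun z => hcell.const_vadd _) hdisj
    _ ≤ volume (S + unitCube d) := by
        refine measure_mono (iUnion_subset fun z => ?_)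
        rintro _ ⟨c, hc, rfl⟩
        exact add_mem_add z.2 fun i _ => Ico_subset_Icc_self (hc i trivial)

theorem encard_latticePt_sdiff_erode_le_volume_innerCollar {J I : Set (EuclideanSpace ℝ (Fin d))}
    (hJ : IsClosed J) (hJconv : Convex ℝ J) (hI : Bornology.IsBounded I) :
    (((J \ erode J I) ∩ {u | IsLatticePt u}).encard : ENNReal) ≤
      volume (innerCollar (diam (insert 0 I) + √d) (J + unitCube d)) := by
  have hdiam : diam (unitCube d) ≤ √d :=
    diam_le_of_forall_dist_le (Real.sqrt_nonneg _) fun _ hx _ hy =>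
      dist_le_sqrt_of_mem_unitCube hx hy
  refine (encard_le_volume_add_unitCube fun _ hz => hz.2).trans (measure_mono ?_)
  calc (J \ erode J I) ∩ {u | IsLatticePt u} + unitCube d
      ⊆ (J \ erode J I) + unitCube d := add_subset_add_right inter_subset_left
    _ ⊆ innerCollar (diam (insert 0 I) + diam (unitCube d)) (J + unitCube d) :=
        sdiff_forall_add_mem_add_subset_innerCollar hJconv hJ hI isCompact_unitCube.isBounded
          ⟨0, zero_mem_unitCube⟩
    _ ⊆ innerCollar (diam (insert 0 I) + √d) (J + unitCube d) :=
        innerCollar_mono (by gcongr) _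

theorem per_eq_toReal {k : ℕ} (J : Set (EuclideanSpace ℝ (Fin (k + 1)))) :
    per J = (μH[k] (frontier J)).toReal := by
  rw [per, Nat.cast_succ, add_sub_cancel_right]

theorem encard_latticePt_sdiff_erode_le {k : ℕ} {J I : Set (EuclideanSpace ℝ (Fin (k + 1)))}
    (hJ : IsCompact J) (hJconv : Convex ℝ J) (hI : Bornology.IsBounded I)
    {c : EuclideanSpace ℝ (Fin (k + 1))} {R ε : ℝ} (hε : 0 < ε) (hR : √(k + 1 : ℕ) ≤ ε * R)
    (hball : closedBall c R ⊆ J) :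
    (((J \ erode J I) ∩ {u | IsLatticePt u}).encard : ENNReal) ≤
      ENNReal.ofReal ((diam (insert 0 I) + √(k + 1 : ℕ)) * (1 + ε) ^ k) * μH[k] (frontier J) := by
  set Q := unitCube (k + 1)
  have hR0 : 0 < R := pos_of_mul_pos_right (lt_of_lt_of_le (by positivity) hR) hε.le
  have hJQ : J ⊆ J + Q := subset_add_left J zero_mem_unitCube
  have hJQc : IsCompact (J + Q) := hJ.add isCompact_unitCube
  have hJQint : (interior (J + Q)).Nonempty :=
    ⟨c, mem_interior_iff_mem_nhds.2 (mem_of_superset (closedBall_mem_nhds c hR0)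
      (hball.trans hJQ))⟩
  have hQball : Q ⊆ closedBall 0 (ε * R) := fun q hq =>
    (dist_le_sqrt_of_mem_unitCube hq zero_mem_unitCube).trans hR
  calc (((J \ erode J I) ∩ {u | IsLatticePt u}).encard : ENNReal)
      ≤ volume (innerCollar (diam (insert 0 I) + √(k + 1 : ℕ)) (J + Q)) :=
        encard_latticePt_sdiff_erode_le_volume_innerCollar hJ.isClosed hJconv hI
    _ ≤ ENNReal.ofReal (diam (insert 0 I) + √(k + 1 : ℕ)) * μHE[k] (frontier (J + Q)) :=
        volume_innerCollar_le finrank_euclideanSpace_fin (hJconv.add convex_unitCube) hJQc hJQint _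
    _ ≤ ENNReal.ofReal (diam (insert 0 I) + √(k + 1 : ℕ)) *
          (ENNReal.ofReal ((1 + ε) ^ k) * μHE[k] (frontier J)) := by
        gcongr
        exact euclideanHausdorffMeasure_frontier_le_of_subset_image_homothety
          (hJconv.add convex_unitCube) hJQc.isClosed hJQint hJ (by positivity)
          (add_subset_image_homothety hJconv hball hε hQball) k
    _ = ENNReal.ofReal ((diam (insert 0 I) + √(k + 1 : ℕ)) * (1 + ε) ^ k) *
          μHE[k] (frontier J) := by
        rw [← mul_assoc, ENNReal.ofReal_mul (add_nonneg diam_nonneg (Real.sqrt_nonneg _))]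
    _ ≤ ENNReal.ofReal ((diam (insert 0 I) + √(k + 1 : ℕ)) * (1 + ε) ^ k) *
          μH[k] (frontier J) := by
        gcongr
        exact euclideanHausdorffMeasure_le_hausdorffMeasure k

theorem ncard_latticePt_sdiff_erode_div_per_le {J I : Set (EuclideanSpace ℝ (Fin d))}
    (hJ : IsCompact J) (hJconv : Convex ℝ J) (hper : 0 < per J) (hI : Bornology.IsBounded I)
    {c : EuclideanSpace ℝ (Fin d)} {R ε : ℝ} (hε : 0 < ε) (hR : √d ≤ ε * R)
    (hball : closedBall c R ⊆ J) :
    ((J \ erode J I) ∩ {u | IsLatticePt u}).ncard / per J ≤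
      (diam (insert 0 I) + √d) * (1 + ε) ^ (d - 1) := by
  obtain _ | k := d
  · simp [per] at hper
  have hperJ : ENNReal.ofReal (per J) = μH[k] (frontier J) := by
    rw [per_eq_toReal] at hper ⊢
    exact ENNReal.ofReal_toReal (ENNReal.toReal_pos_iff.1 hper).2.ne
  have hbound : 0 ≤ (diam (insert 0 I) + √(k + 1 : ℕ)) * (1 + ε) ^ k :=
    mul_nonneg (add_nonneg diam_nonneg (Real.sqrt_nonneg _)) (by positivity)
  rw [div_le_iff₀ hper, Nat.add_sub_cancel,
    ← ENNReal.ofReal_le_ofReal_iff (mul_nonneg hbound hper.le), ENNReal.ofReal_natCast,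
    ENNReal.ofReal_mul hbound, hperJ]
  refine le_trans ?_ (encard_latticePt_sdiff_erode_le hJ hJconv hI hε hR hball)
  exact_mod_cast ncard_le_encard _

end Lattice

theorem tendsto_rpow_neg_atTop_nhdsGT {ι : Type*} {l : Filter ι} {f : ι → ℝ}
    (hf : Tendsto f l atTop) {a : ℝ} (ha : 0 < a) :
    Tendsto (fun i => f i ^ (-a)) l (𝓝[>] 0) :=
  tendsto_nhdsWithin_iff.2 ⟨(tendsto_rpow_neg_atTop ha).comp hf,
    (hf.eventually_gt_atTop 0).mono fun _ hi => Real.rpow_pos_of_pos hi _⟩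

theorem stmt15_general {ι : Type*} {l : Filter ι} [l.NeBot] {d : ℕ}
    {J : ι → Set (EuclideanSpace ℝ (Fin d))} (hJ : ∀ i, IsCompact (J i) ∧ Convex ℝ (J i))
    (hper : ∀ᶠ i in l, 0 < per (J i)) (hball : ∀ R, ∀ᶠ i in l, ∃ c, closedBall c R ⊆ J i)
    {I : Set (EuclideanSpace ℝ (Fin d))} (hI : Bornology.IsBounded I) :
    limsup (fun i =>
        (((J i \ erode (J i) I) ∩ {u | IsLatticePt u}).ncard : ℝ) / per (J i)) l
      ≤ diam (insert 0 I) + √d := by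
  have hbound : ∀ ε > 0, limsup (fun i =>
      (((J i \ erode (J i) I) ∩ {u | IsLatticePt u}).ncard : ℝ) / per (J i)) l
        ≤ (diam (insert 0 I) + √d) * (1 + ε) ^ (d - 1) := by
    intro ε hε
    refine limsup_le_of_le (IsBoundedUnder.isCoboundedUnder_le
      (isBoundedUnder_of ⟨0, fun i => div_nonneg (Nat.cast_nonneg _) ENNReal.toReal_nonneg⟩)) ?_
    filter_upwards [hper, hball (√d / ε)] with i hperi ⟨c, hc⟩
    exact ncard_latticePt_sdiff_erode_div_per_le (hJ i).1 (hJ i).2 hperi hI hε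
      (mul_div_cancel₀ _ hε.ne').ge hc
  have hlim : Tendsto (fun ε : ℝ => (diam (insert 0 I) + √d) * (1 + ε) ^ (d - 1)) (𝓝[>] 0)
      (𝓝 (diam (insert 0 I) + √d)) := by
    have hcont : Continuous fun ε : ℝ => (diam (insert 0 I) + √d) * (1 + ε) ^ (d - 1) := by fun_prop
    simpa using (hcont.tendsto 0).mono_left nhdsWithin_le_nhds
  exact ge_of_tendsto hlim (eventually_nhdsWithin_of_forall hbound)

theorem stmt15 {d : ℕ} (hd : 2 ≤ d)
    (J : ℕ → Set (EuclideanSpace ℝ (Fin d)))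
    (hJ : ∀ n, IsCompact (J n) ∧ Convex ℝ (J n) ∧ 0 ∈ interior (J n))
    (hp : Tendsto (fun n => per (J n)) atTop atTop)
    (Jinf : Set (EuclideanSpace ℝ (Fin d)))
    (hJinfc : IsCompact Jinf) (hJinfconv : Convex ℝ Jinf) (hJinf0 : 0 ∈ interior Jinf)
    (hJinfper : per Jinf = 1)
    (hconv : Tendsto
      (fun n => hausdorffDist ((per (J n) ^ (-((d : ℝ) - 1)⁻¹)) • J n) Jinf) atTop (𝓝 0))
    (I : Set (EuclideanSpace ℝ (Fin d)))
    (hIc : IsCompact I) (hIconv : Convex ℝ I) (hI0 : (0 : EuclideanSpace ℝ (Fin d)) ∈ I) :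
    Filter.limsup
        (fun n =>
          (((J n \ erode (J n) I) ∩ {u | IsLatticePt u}).ncard : ℝ) / per (J n)) atTop
      ≤ Metric.diam I + Real.sqrt d := by
  have hd1 : (0 : ℝ) < d - 1 := sub_pos.2 (by exact_mod_cast hd)
  have hball := eventually_exists_closedBall_subset
    (fun n => ⟨(hJ n).1, (hJ n).2.1, 0, interior_subset (hJ n).2.2⟩)
    (tendsto_rpow_neg_atTop_nhdsGT hp (inv_pos.2 hd1)) hJinfc.isBounded ⟨0, hJinf0⟩ hconv
  simpa only [insert_eq_of_mem hI0] using stmt15_general (fun n => ⟨(hJ n).1, (hJ n).2.1⟩)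
    (hp.eventually_gt_atTop 0) hball hIc.isBounded
end

section
/- For a cellular automaton f on a ℤ^d-subshift and any convex domain O with 0 in its interior and any real α > 0, the rescaled entropies along the dilated exhaustions agree: limsup_n h_*(f, 𝖯_{nO})/p(nO) = limsup_n h_*(f, 𝖯_{nαO})/p(nαO). -/
open Set MeasureTheory Filter Topology Pointwise

/-- The group `ℤ^d`. -/
abbrev Zd (d : ℕ) := Fin d → ℤ

/-- Configurations `𝒜^{ℤ^d}` with the product topology (`A` discrete). -/
abbrev Config (A : Type*) (d : ℕ) := Zd d → A

/-- The shift action of `ℤ^d`. -/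
def shift {A : Type*} {d : ℕ} (l : Zd d) (x : Config A d) : Config A d := fun k => x (k + l)

/-- Embedding of `ℤ^d` in `ℝ^d`. -/
noncomputable def emb {d : ℕ} (z : Zd d) : EuclideanSpace ℝ (Fin d) :=
  (WithLp.equiv 2 (Fin d → ℝ)).symm fun i => (z i : ℝ)

/-- The lattice points of a subset `J` of `ℝ^d`, as a subset of `ℤ^d`. -/
def latOf {d : ℕ} (J : Set (EuclideanSpace ℝ (Fin d))) : Set (Zd d) := {z | emb z ∈ J}

/-- Topological entropy `h_top(f, 𝖯_L)` of `f` relative to the partition of `X` into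
`L`-cylinders. -/
noncomputable def topPartEnt {A : Type*} {d : ℕ} (f : Config A d → Config A d)
    (X : Set (Config A d)) (L : Set (Zd d)) : ℝ :=
  limsup (fun n : ℕ =>
    Real.log (Nat.card ((fun x => fun (k : Fin n) (j : L) => f^[k] x (j : Zd d)) '' X)) / n)
    atTop

/-- Measure-theoretic entropy `h_μ(f, 𝖯_L)` of `f` relative to the partition into
`L`-cylinders. -/
noncomputable def measPartEnt {A : Type*} {d : ℕ} [MeasurableSpace A]
    (μ : Measure (Config A d)) (f : Config A d → Config A d) (L : Set (Zd d)) : ℝ :=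
  limsup (fun n : ℕ =>
    (∑' Q : Fin n → L → A,
      Real.negMulLog
        (μ {x | ∀ (k : Fin n) (j : L), f^[k] x (j : Zd d) = Q k j}).toReal) / n) atTop

/-!
The dilate `t • O` has perimeter `t ^ (d - 1) * per O`, and both entropies are monotone in the
finite set of observed sites, hence in `t`. So everything reduces to sampling `H t / t ^ s`, with
`H` monotone, along the progressions `a * n` and `b * n`: rounding `a * n` up to the multiple
`b * ⌈a / b * n⌉` only increases `H`, and changes the denominator by a factor tending to `1`.
Upper bounds thus pass from one progression to the other up to `ε`, which determines the `limsup`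
even when it is not known to be finite.
-/

section Limsup

theorem csInf_eq_csInf_of_lowerBounds_eq {R : Type*} [ConditionallyCompleteLinearOrder R]
    [NoTopOrder R] {s t : Set R} (h : lowerBounds s = lowerBounds t) : sInf s = sInf t := by
  have nonempty_of_eq {s t : Set R} (h : lowerBounds s = lowerBounds t) (hs : s.Nonempty) :
      t.Nonempty := by
    obtain ⟨x, hx⟩ := hs
    obtain ⟨y, hy⟩ := exists_not_le x
    by_contra ht
    rw [not_nonempty_iff_eq_empty.1 ht, lowerBounds_empty] at h
    exact hy ((h ▸ mem_univ y : y ∈ lowerBounds s) hx)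
  rcases s.eq_empty_or_nonempty with hs | hs
  · rw [hs, not_nonempty_iff_eq_empty.1 fun ht => (nonempty_of_eq h.symm ht).ne_empty hs]
  by_cases hbdd : BddBelow s
  · have hglb : IsGLB t (sInf s) := by simpa only [IsGLB, h] using isGLB_csInf hs hbdd
    exact (hglb.csInf_eq (nonempty_of_eq h hs)).symm
  · have hbdd' : ¬BddBelow t := by rwa [BddBelow, ← h]
    rw [csInf_of_not_bddBelow hbdd, csInf_of_not_bddBelow hbdd']

theorem limsup_eq_limsup_of_forall_lt {R ι κ : Type*} [ConditionallyCompleteLinearOrder R]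
    [DenselyOrdered R] [NoTopOrder R] {l : Filter ι} {l' : Filter κ} {u : ι → R} {v : κ → R}
    (huv : ∀ C C', C < C' → (∀ᶠ i in l, u i ≤ C) → ∀ᶠ j in l', v j ≤ C')
    (hvu : ∀ C C', C < C' → (∀ᶠ j in l', v j ≤ C) → ∀ᶠ i in l, u i ≤ C') :
    limsup u l = limsup v l' := by
  rw [limsup_eq, limsup_eq]
  refine csInf_eq_csInf_of_lowerBounds_eq (Subset.antisymm ?_ ?_)
  · exact fun b hb C hC => le_of_forall_gt_imp_ge_of_dense fun C' hC' => hb (hvu C C' hC' hC)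
  · exact fun b hb C hC => le_of_forall_gt_imp_ge_of_dense fun C' hC' => hb (huv C C' hC' hC)

theorem limsup_div_natCast_le_limsup_div_natCast {u v : ℕ → ℝ} {C : ℝ} (hu : ∀ n, 0 ≤ u n)
    (huv : ∀ n, u n ≤ v n) (hv : ∀ n, v n ≤ n * C) :
    limsup (fun n : ℕ => u n / n) atTop ≤ limsup (fun n : ℕ => v n / n) atTop := by
  have hbdd : ∀ᶠ n : ℕ in atTop, v n / n ≤ C := by
    filter_upwards [eventually_gt_atTop 0] with n hn
    rw [div_le_iff₀' (Nat.cast_pos.2 hn)]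
    exact hv n
  refine limsup_le_limsup (.of_forall fun n => ?_) ?_ (isBoundedUnder_of_eventually_le hbdd)
  · exact div_le_div_of_nonneg_right (huv n) n.cast_nonneg
  · exact IsCoboundedUnder.of_frequently_ge (a := 0)
      (.of_forall fun n => div_nonneg (hu n) n.cast_nonneg)

theorem tendsto_mul_ceil_div {a b : ℝ} (ha : 0 < a) (hb : 0 < b) :
    Tendsto (fun n : ℕ => b * ⌈a / b * n⌉₊ / (a * n)) atTop (𝓝 1) := by
  have hceil : Tendsto (fun n : ℕ => (⌈a / b * n⌉₊ : ℝ) / n) atTop (𝓝 (a / b)) :=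
    (tendsto_nat_ceil_mul_div_atTop (by positivity)).comp tendsto_natCast_atTop_atTop
  convert hceil.const_mul (b / a) using 2 <;> field_simp

theorem eventually_div_rpow_le_of_lt {H : ℝ → ℝ} (hH : MonotoneOn H (Ioi 0)) (s : ℝ) {a b : ℝ}
    (ha : 0 < a) (hb : 0 < b) {C C' : ℝ} (hCC' : C < C')
    (hC : ∀ᶠ n : ℕ in atTop, H (b * n) / (b * n) ^ s ≤ C) :
    ∀ᶠ n : ℕ in atTop, H (a * n) / (a * n) ^ s ≤ C' := by
  have hm : Tendsto (fun n : ℕ => ⌈a / b * n⌉₊) atTop atTop :=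
    tendsto_nat_ceil_atTop.comp (tendsto_natCast_atTop_atTop.const_mul_atTop (by positivity))
  have hratio : Tendsto (fun n : ℕ => C * (b * ⌈a / b * n⌉₊ / (a * n)) ^ s) atTop (𝓝 C) := by
    simpa using ((tendsto_mul_ceil_div ha hb).rpow_const (.inl one_ne_zero)).const_mul C
  filter_upwards [hm.eventually hC, hratio.eventually_lt_const hCC', eventually_gt_atTop 0]
    with n hCn hlt hn
  have han : 0 < a * n := mul_pos ha (Nat.cast_pos.2 hn)
  have hle : a * n ≤ b * ⌈a / b * n⌉₊ := by
    rw [← div_le_iff₀' hb, mul_div_right_comm]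
    exact Nat.le_ceil _
  have hbm : 0 < b * ⌈a / b * n⌉₊ := han.trans_le hle
  calc H (a * n) / (a * n) ^ s
      ≤ H (b * ⌈a / b * n⌉₊) / (a * n) ^ s := by gcongr; exact hH han hbm hle
    _ ≤ C * (b * ⌈a / b * n⌉₊) ^ s / (a * n) ^ s := by
        gcongr
        exact (div_le_iff₀ (by positivity)).1 hCn
    _ = C * (b * ⌈a / b * n⌉₊ / (a * n)) ^ s := by
        rw [Real.div_rpow hbm.le han.le, mul_div_assoc]
    _ ≤ C' := hlt.le

theorem limsup_div_rpow_mul_natCast_eq {H : ℝ → ℝ} (hH : MonotoneOn H (Ioi 0)) (s : ℝ) {a b : ℝ}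
    (ha : 0 < a) (hb : 0 < b) :
    limsup (fun n : ℕ => H (a * n) / (a * n) ^ s) atTop
      = limsup (fun n : ℕ => H (b * n) / (b * n) ^ s) atTop :=
  limsup_eq_limsup_of_forall_lt (fun _ _ => eventually_div_rpow_le_of_lt hH s hb ha)
    fun _ _ => eventually_div_rpow_le_of_lt hH s ha hb

end Limsup

section Dilation

theorem smul_set_monotoneOn_of_starConvex {E : Type*} [AddCommGroup E] [Module ℝ E] {O : Set E}
    (hO : StarConvex ℝ 0 O) : MonotoneOn (fun t : ℝ => t • O) (Ioi 0) := by
  rintro s (hs : 0 < s) t (ht : 0 < t) hst _ ⟨x, hx, rfl⟩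
  refine ⟨(s / t) • x, hO.smul_mem hx (by positivity) ((div_le_one ht).2 hst), ?_⟩
  simp only [smul_smul, mul_div_cancel₀ s ht.ne']

variable {d : ℕ}

theorem latOf_finite {J : Set (EuclideanSpace ℝ (Fin d))} (hJ : Bornology.IsBounded J) :
    (latOf J).Finite := by
  obtain ⟨R, hR⟩ := hJ.exists_norm_le
  refine (finite_Icc (fun _ : Fin d => -⌈R⌉) (fun _ => ⌈R⌉)).subset fun z hz => ?_
  have hcoord (i : Fin d) : |(z i : ℝ)| ≤ (⌈R⌉ : ℝ) :=
    calc |(z i : ℝ)| = ‖emb z i‖ := rfl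
      _ ≤ ‖emb z‖ := PiLp.norm_apply_le _ _
      _ ≤ R := hR _ hz
      _ ≤ ⌈R⌉ := Int.le_ceil R
  exact ⟨fun i => by exact_mod_cast (abs_le.1 (hcoord i)).1,
    fun i => by exact_mod_cast (abs_le.1 (hcoord i)).2⟩

theorem per_smul (J : Set (EuclideanSpace ℝ (Fin d))) {t : ℝ} (ht : 0 < t) :
    per (t • J) = t ^ ((d : ℝ) - 1) * per J := by
  rcases d with _ | k
  · simp [per]
  have hfrontier : frontier (t • J) = t • frontier J :=
    ((Homeomorph.smulOfNeZero t ht.ne').image_frontier J).symm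
  have hdim : 0 ≤ ((k + 1 : ℕ) : ℝ) - 1 := by simp
  rw [per, per, hfrontier, Measure.hausdorffMeasure_smul₀ hdim ht.ne', ENNReal.smul_def,
    smul_eq_mul, ENNReal.toReal_mul]
  simp [abs_of_pos ht]

theorem monotoneOn_latOf_smul {h : Set (Zd d) → ℝ} (hh : MonotoneOn h {L | L.Finite})
    {O : Set (EuclideanSpace ℝ (Fin d))} (hOb : Bornology.IsBounded O) (hO : StarConvex ℝ 0 O) :
    MonotoneOn (fun t : ℝ => h (latOf (t • O))) (Ioi 0) := fun s hs t ht hst =>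
  hh (latOf_finite (hOb.smul₀ s)) (latOf_finite (hOb.smul₀ t))
    fun _ hz => smul_set_monotoneOn_of_starConvex hO hs ht hst hz

theorem limsup_div_per_smul_smul_eq {h : Set (Zd d) → ℝ} (hh : MonotoneOn h {L | L.Finite})
    {O : Set (EuclideanSpace ℝ (Fin d))} (hOb : Bornology.IsBounded O) (hO : StarConvex ℝ 0 O)
    {a b : ℝ} (ha : 0 < a) (hb : 0 < b) :
    limsup (fun n : ℕ => h (latOf ((n : ℝ) • a • O)) / per ((n : ℝ) • a • O)) atTop
      = limsup (fun n : ℕ => h (latOf ((n : ℝ) • b • O)) / per ((n : ℝ) • b • O)) atTop := by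
  have hsample {c : ℝ} (hc : 0 < c) :
      (fun n : ℕ => h (latOf ((n : ℝ) • c • O)) / per ((n : ℝ) • c • O)) =ᶠ[atTop]
        fun n : ℕ => h (latOf ((c * n) • O)) / per O / (c * n) ^ ((d : ℝ) - 1) := by
    filter_upwards [eventually_gt_atTop 0] with n hn
    rw [smul_smul, mul_comm (n : ℝ) c, per_smul O (mul_pos hc (Nat.cast_pos.2 hn)), div_div,
      mul_comm (per O)]
  have hmono : MonotoneOn (fun t : ℝ => h (latOf (t • O)) / per O) (Ioi 0) :=
    fun _ hs _ ht hst => div_le_div_of_nonneg_right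
      (monotoneOn_latOf_smul hh hOb hO hs ht hst) ENNReal.toReal_nonneg
  rw [limsup_congr (hsample ha), limsup_congr (hsample hb)]
  exact limsup_div_rpow_mul_natCast_eq hmono _ ha hb

end Dilation

section FiberEntropy

theorem negMulLog_sum_le {ι : Type*} (s : Finset ι) (p : ι → ℝ) (hp : ∀ i ∈ s, 0 ≤ p i) :
    Real.negMulLog (∑ i ∈ s, p i) ≤ ∑ i ∈ s, Real.negMulLog (p i) := by
  simp only [Real.negMulLog, neg_mul, Finset.sum_neg_distrib, neg_le_neg_iff, Finset.sum_mul]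
  refine Finset.sum_le_sum fun i hi => ?_
  rcases (hp i hi).eq_or_lt with hzero | hpos
  · simp [← hzero]
  · gcongr
    exact Finset.single_le_sum hp hi

theorem sum_negMulLog_le_log_card {ι : Type*} [Fintype ι] {p : ι → ℝ} (hp : ∀ i, 0 ≤ p i)
    (hsum : ∑ i, p i = 1) : ∑ i, Real.negMulLog (p i) ≤ Real.log (Fintype.card ι) := by
  have : Nonempty ι := by
    by_contra hempty
    rw [not_nonempty_iff] at hempty
    simp at hsum
  have hN : (0 : ℝ) < Fintype.card ι := Nat.cast_pos.2 Fintype.card_pos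
  have hjensen := Real.concaveOn_negMulLog.le_map_sum (t := Finset.univ)
    (w := fun _ => (Fintype.card ι : ℝ)⁻¹) (p := p) (fun _ _ => by positivity) (by simp [hN.ne'])
    fun i _ => hp i
  simp only [smul_eq_mul, ← Finset.mul_sum, hsum, mul_one, Real.negMulLog, Real.log_inv,
    neg_mul_neg] at hjensen
  exact le_of_mul_le_mul_left hjensen (inv_pos.2 hN)

variable {Ω β γ : Type*} [MeasurableSpace Ω]

/-- The Shannon entropy of the partition of `Ω` into the fibers of `φ : Ω → β`. Coding a partition
by a map turns refinement into factorization of maps. It is meant for finite `β`: over an infinite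
`β` a divergent sum is `0`. -/
noncomputable def fiberEntropy (μ : Measure Ω) (φ : Ω → β) : ℝ :=
  ∑' b, Real.negMulLog (μ.real (φ ⁻¹' {b}))

theorem fiberEntropy_nonneg (μ : Measure Ω) [IsProbabilityMeasure μ] (φ : Ω → β) :
    0 ≤ fiberEntropy μ φ :=
  tsum_nonneg fun _ => Real.negMulLog_nonneg measureReal_nonneg measureReal_le_one

variable [Finite β] [MeasurableSpace β] [MeasurableSingletonClass β] {φ : Ω → β}

theorem fiberEntropy_comp_le (μ : Measure Ω) [IsFiniteMeasure μ] [Finite γ] (r : β → γ)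
    (hφ : Measurable φ) : fiberEntropy μ (r ∘ φ) ≤ fiberEntropy μ φ := by
  classical
  have := Fintype.ofFinite β
  have := Fintype.ofFinite γ
  rw [fiberEntropy, fiberEntropy, tsum_fintype, tsum_fintype, ← Finset.sum_fiberwise Finset.univ r]
  refine Finset.sum_le_sum fun c _ => ?_
  have hfiber : μ.real ((r ∘ φ) ⁻¹' {c}) = ∑ b with r b = c, μ.real (φ ⁻¹' {b}) := by
    rw [sum_measureReal_preimage_singleton _ fun b _ => hφ (measurableSet_singleton b)]
    congr 1
    ext x
    simp
  rw [hfiber]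
  exact negMulLog_sum_le _ _ fun _ _ => measureReal_nonneg

theorem fiberEntropy_le_log_card (μ : Measure Ω) [IsProbabilityMeasure μ] (hφ : Measurable φ) :
    fiberEntropy μ φ ≤ Real.log (Nat.card β) := by
  have := Fintype.ofFinite β
  rw [fiberEntropy, tsum_fintype, Nat.card_eq_fintype_card]
  refine sum_negMulLog_le_log_card (fun _ => measureReal_nonneg) ?_
  rw [sum_measureReal_preimage_singleton _ fun b _ => hφ (measurableSet_singleton b)]
  simp

end FiberEntropy

section LogCardImage

variable {Ω β γ : Type*} [Finite β] {X : Set Ω}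

theorem log_card_image_comp_le (hX : X.Nonempty) (φ : Ω → β) (r : β → γ) :
    Real.log (Nat.card ((r ∘ φ) '' X)) ≤ Real.log (Nat.card (φ '' X)) := by
  have hfin : (φ '' X).Finite := toFinite _
  rw [image_comp]
  have hpos : 0 < Nat.card (r '' (φ '' X)) := by
    rw [Nat.card_coe_set_eq, ncard_pos (hfin.image r)]
    exact (hX.image φ).image r
  exact Real.log_le_log (Nat.cast_pos.2 hpos) (Nat.cast_le.2 (Nat.card_image_le hfin))

theorem log_card_image_le_log_card (hX : X.Nonempty) (φ : Ω → β) :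
    Real.log (Nat.card (φ '' X)) ≤ Real.log (Nat.card β) := by
  have : Nonempty (φ '' X) := (hX.image φ).to_subtype
  exact Real.log_le_log (Nat.cast_pos.2 Nat.card_pos)
    (Nat.cast_le.2 (Nat.card_le_card_of_injective _ Subtype.val_injective))

end LogCardImage

section Itinerary

variable {A : Type*} {d : ℕ}

/-- The itinerary of `x` under `f`: the restrictions of `x, f x, …, f^[n - 1] x` to `L`. Its
fibers are the cells of the join `⋁_{k < n} f⁻ᵏ 𝖯_L`. -/
def itinerary (f : Config A d → Config A d) (L : Set (Zd d)) (n : ℕ) (x : Config A d) :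
    Fin n → L → A := fun k j => f^[k] x j

theorem log_card_itineraries {L : Set (Zd d)} (hL : L.Finite) (n : ℕ) :
    Real.log (Nat.card (Fin n → L → A)) = n * (Nat.card L * Real.log (Nat.card A)) := by
  have := hL.to_subtype
  simp only [Nat.card_fun, Nat.card_fin, Nat.cast_pow, Real.log_pow]

theorem measurable_itinerary [MeasurableSpace A] {f : Config A d → Config A d} (hf : Measurable f)
    (L : Set (Zd d)) (n : ℕ) : Measurable (itinerary f L n) :=
  measurable_pi_lambda _ fun k => measurable_pi_lambda _ fun j =>
    (measurable_pi_apply (j : Zd d)).comp (hf.iterate k)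

theorem measPartEnt_eq_limsup_fiberEntropy [MeasurableSpace A] (μ : Measure (Config A d))
    (f : Config A d → Config A d) (L : Set (Zd d)) :
    measPartEnt μ f L = limsup (fun n : ℕ => fiberEntropy μ (itinerary f L n) / n) atTop := by
  have hfiber (n : ℕ) (Q : Fin n → L → A) :
      itinerary f L n ⁻¹' {Q} = {x | ∀ (k : Fin n) (j : L), f^[k] x (j : Zd d) = Q k j} := by
    ext x
    simp [itinerary, funext_iff]
  simp only [measPartEnt, fiberEntropy, hfiber, Measure.real]

variable [Finite A]

theorem topPartEnt_monotoneOn (f : Config A d → Config A d) {X : Set (Config A d)}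
    (hX : X.Nonempty) : MonotoneOn (topPartEnt f X) {L | L.Finite} := by
  intro L _ L' hL' hLL'
  have := hL'.to_subtype
  exact limsup_div_natCast_le_limsup_div_natCast (fun n => Real.log_natCast_nonneg _)
    (fun n => log_card_image_comp_le hX (itinerary f L' n) fun Q k => Q k ∘ inclusion hLL')
    fun n => (log_card_image_le_log_card hX (itinerary f L' n)).trans_eq
      (log_card_itineraries hL' n)

theorem measPartEnt_monotoneOn [MeasurableSpace A] [MeasurableSingletonClass A]
    (μ : Measure (Config A d)) [IsProbabilityMeasure μ] {f : Config A d → Config A d}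
    (hf : Measurable f) : MonotoneOn (measPartEnt μ f) {L | L.Finite} := by
  intro L hL L' hL' hLL'
  have := hL.to_subtype
  have := hL'.to_subtype
  simp only [measPartEnt_eq_limsup_fiberEntropy]
  exact limsup_div_natCast_le_limsup_div_natCast (fun n => fiberEntropy_nonneg μ _)
    (fun n => fiberEntropy_comp_le μ (fun (Q : Fin n → L' → A) k => Q k ∘ inclusion hLL')
      (measurable_itinerary hf L' n))
    fun n => (fiberEntropy_le_log_card μ (measurable_itinerary hf L' n)).trans_eq
      (log_card_itineraries hL' n)

end Itinerary

theorem stmt18_general {d : ℕ} {A : Type*} [Finite A] [MeasurableSpace A]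
    [MeasurableSingletonClass A] {X : Set (Config A d)} (hX : X.Nonempty)
    {f : Config A d → Config A d} (hf : Measurable f) {O : Set (EuclideanSpace ℝ (Fin d))}
    (hOb : Bornology.IsBounded O) (hO : StarConvex ℝ 0 O) {α : ℝ} (hα : 0 < α) :
    (limsup (fun n : ℕ => topPartEnt f X (latOf ((n : ℝ) • O)) / per ((n : ℝ) • O)) atTop
      = limsup (fun n : ℕ =>
          topPartEnt f X (latOf ((n : ℝ) • α • O)) / per ((n : ℝ) • α • O)) atTop) ∧
    ∀ μ : Measure (Config A d), IsProbabilityMeasure μ →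
      limsup (fun n : ℕ => measPartEnt μ f (latOf ((n : ℝ) • O)) / per ((n : ℝ) • O)) atTop
        = limsup (fun n : ℕ =>
            measPartEnt μ f (latOf ((n : ℝ) • α • O)) / per ((n : ℝ) • α • O)) atTop := by
  refine ⟨?_, fun μ _ => ?_⟩
  · simpa only [one_smul] using
      limsup_div_per_smul_smul_eq (topPartEnt_monotoneOn f hX) hOb hO one_pos hα
  · simpa only [one_smul] using
      limsup_div_per_smul_smul_eq (measPartEnt_monotoneOn μ hf) hOb hO one_pos hα

theorem stmt18 {d : ℕ} {A : Type*} [Fintype A] [TopologicalSpace A] [DiscreteTopology A]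
    [MeasurableSpace A] [DiscreteMeasurableSpace A]
    (X : Set (Config A d)) (hXcl : IsClosed X) (hXne : X.Nonempty)
    (hXinv : ∀ l : Zd d, ∀ x ∈ X, shift l x ∈ X)
    (f : Config A d → Config A d) (hf : Set.MapsTo f X X) (hfm : Measurable f)
    (hfc : Continuous f)
    (hcomm : ∀ l : Zd d, ∀ x ∈ X, f (shift l x) = shift l (f x))
    (O : Set (EuclideanSpace ℝ (Fin d)))
    (hOc : IsCompact O) (hOconv : Convex ℝ O) (hO0 : 0 ∈ interior O)
    (α : ℝ) (hα : 0 < α) :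
    (limsup (fun n : ℕ => topPartEnt f X (latOf ((n : ℝ) • O)) / per ((n : ℝ) • O)) atTop
      = limsup (fun n : ℕ =>
          topPartEnt f X (latOf ((n : ℝ) • α • O)) / per ((n : ℝ) • α • O)) atTop) ∧
    ∀ μ : Measure (Config A d), IsProbabilityMeasure μ → μ.map f = μ → μ X = 1 →
      limsup (fun n : ℕ => measPartEnt μ f (latOf ((n : ℝ) • O)) / per ((n : ℝ) • O)) atTop
        = limsup (fun n : ℕ =>
            measPartEnt μ f (latOf ((n : ℝ) • α • O)) / per ((n : ℝ) • α • O)) atTop := by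
  have hmain := stmt18_general hXne hfm hOc.isBounded (hOconv.starConvex (interior_subset hO0)) hα
  exact ⟨hmain.1, fun μ hμ _ _ => hmain.2 μ hμ⟩
end
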